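/- Let V be a finite-dimensional complex vector space, n ∈ ℕ, α_1,…,α_n ∈ V*, v_1,…,v_n ∈ V, and let (J, ≻) be a linearly ordered set with elements j_1 ≺ ⋯ ≺ j_n and j'_1 ≺ ⋯ ≺ j'_n such that {j_1,…,j_n} ∩ {j'_1,…,j'_n} = ∅. Define operators A_1,…,A_{2n} on ΛV* by A_i = v_i⌟ for 1 ≤ i ≤ n and A_{n+m} = (α_m ∧ ·) for 1 ≤ m ≤ n, and assign to A_i the label j_i for i ≤ n and the label j'_{i−n} for i > n. Let π be the unique permutation of {1,…,2n} such that the labels of A_{π(1)}, A_{π(2)}, …, A_{π(2n)} are strictly increasing. Then the matrix M with entries M_{kl} = α_k(v_l)·1[j'_k ≻ j_l] satisfies det M = (−1)^{n(n−1)/2} · sgn(π) · (A_{π(1)} ∘ A_{π(2)} ∘ ⋯ ∘ A_{π(2n)})(1), where the right-hand side is evaluated on 1 ∈ Λ⁰V* = ℂ and is a scalar. -/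

import Mathlib

/-!
The word `A_{π(1)} ∘ ⋯ ∘ A_{π(2n)}` applied to `1` only involves the pairings `α_k(v_l)` for which
`v_l⌟` stands to the left of `α_k ∧`, that is, for which `j_l ≺ j'_k`. All other pairings may hence
be set to zero: replace the `α_k` by the standard basis of `Rⁿ` and the `v_l` by the columns of the
masked matrix `M`. After this change any two operators that stand in the wrong order anticommute, so
sorting the word into `v_1⌟ ⋯ v_n⌟ (α_1 ∧ ⋯ ∧ α_n)` costs exactly `sgn π`, and the sorted word is
evaluated by Laplace expansion.
-/

section Anticommuting

theorem exists_perm_comp_succAbove_eq_succ {n : ℕ} (π : Equiv.Perm (Fin (n + 1))) :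
    ∃ σ : Equiv.Perm (Fin n), (∀ i, π ((π.symm 0).succAbove i) = (σ i).succ) ∧
      Equiv.Perm.sign π = (-1) ^ (π.symm 0 : ℕ) * Equiv.Perm.sign σ := by
  set p := π.symm 0 with hp
  obtain ⟨⟨q, σ⟩, hσ⟩ := Equiv.Perm.decomposeFin.symm.surjective (π * p.cycleRange.symm)
  obtain rfl : q = 0 := by simpa [hp] using congr($hσ 0)
  refine ⟨σ, fun i => ?_, ?_⟩
  · simpa using congr($hσ i.succ).symm
  · have hsign := congr(Equiv.Perm.sign $hσ)
    rw [Equiv.Perm.decomposeFin.symm_sign, if_pos rfl, one_mul, Equiv.Perm.sign_mul,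
      Equiv.Perm.sign_symm, Fin.sign_cycleRange] at hsign
    rw [hsign, mul_left_comm, ← mul_pow]
    simp

variable {E : Type*} [Ring E]

theorem prod_ofFn_eq_smul_of_anticommute {n : ℕ} (f : Fin (n + 1) → E) (p : Fin (n + 1))
    (h : ∀ i < p, f i * f p = -(f p * f i)) :
    (List.ofFn f).prod =
      (-1 : ℤˣ) ^ (p : ℕ) • (f p * (List.ofFn fun i => f (p.succAbove i)).prod) := by
  induction n with
  | zero => simp [Fin.fin_one_eq_zero p]
  | succ n ih =>
    cases p using Fin.cases with
    | zero => simp [List.ofFn_succ]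
    | succ p =>
      have htail := ih (fun i => f i.succ) p fun i hi => h i.succ (Fin.succ_lt_succ_iff.mpr hi)
      have hhead : f 0 * f p.succ = -(f p.succ * f 0) := h 0 p.succ_pos
      rw [List.ofFn_succ, List.prod_cons, htail, List.ofFn_succ (f := fun i => f _),
        List.prod_cons, mul_smul_comm, ← mul_assoc, hhead]
      simp [pow_succ', mul_assoc]

theorem prod_ofFn_perm_eq_sign_smul {n : ℕ} (f : Fin n → E) (π : Equiv.Perm (Fin n))
    (h : ∀ i j, i < j → π j < π i → f (π i) * f (π j) = -(f (π j) * f (π i))) :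
    (List.ofFn fun i => f (π i)).prod = Equiv.Perm.sign π • (List.ofFn f).prod := by
  induction n with
  | zero => simp [Subsingleton.elim π 1]
  | succ n ih =>
    obtain ⟨σ, hσ, hsign⟩ := exists_perm_comp_succAbove_eq_succ π
    have hmove := prod_ofFn_eq_smul_of_anticommute (fun i => f (π i)) (π.symm 0) fun i hi =>
      h i _ hi <| by
        rw [π.apply_symm_apply, Fin.pos_iff_ne_zero]
        exact fun h0 => hi.ne (π.eq_symm_apply.mpr h0)
    have hrest := ih (fun i => f i.succ) σ fun i j hij hlt => by
      simpa only [hσ] using h _ _ (Fin.strictMono_succAbove (π.symm 0) hij)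
        (by simpa only [hσ, Fin.succ_lt_succ_iff] using hlt)
    simp only [hσ, π.apply_symm_apply] at hmove
    rw [hmove, hrest, hsign, mul_smul, List.ofFn_succ, List.prod_cons, mul_smul_comm]

end Anticommuting

section LadderOperators

variable {R M N : Type*} [CommRing R] [AddCommGroup M] [Module R M] [AddCommGroup N] [Module R N]

/-- The interior product `d⌟` on the exterior algebra, which Mathlib provides as the left
contraction on the Clifford algebra of the zero form. -/
def interiorProduct : Module.Dual R M →ₗ[R] Module.End R (ExteriorAlgebra R M) :=
  CliffordAlgebra.contractLeft (Q := (0 : QuadraticForm R M))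

theorem interiorProduct_algebraMap (d : Module.Dual R M) (r : R) :
    interiorProduct d (algebraMap R (ExteriorAlgebra R M) r) = 0 :=
  CliffordAlgebra.contractLeft_algebraMap _ d r

theorem interiorProduct_one (d : Module.Dual R M) : interiorProduct d 1 = 0 :=
  CliffordAlgebra.contractLeft_one _ d

theorem interiorProduct_ι_mul (d : Module.Dual R M) (a : M) (y : ExteriorAlgebra R M) :
    interiorProduct d (ExteriorAlgebra.ι R a * y) =
      d a • y - ExteriorAlgebra.ι R a * interiorProduct d y :=
  CliffordAlgebra.contractLeft_ι_mul _ _ _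

theorem interiorProduct_comm (d d' : Module.Dual R M) (y : ExteriorAlgebra R M) :
    interiorProduct d (interiorProduct d' y) = -interiorProduct d' (interiorProduct d y) :=
  CliffordAlgebra.contractLeft_comm _ _ _

theorem map_interiorProduct (φ : M →ₗ[R] N) (d : Module.Dual R N) (y : ExteriorAlgebra R M) :
    ExteriorAlgebra.map φ (interiorProduct (d ∘ₗ φ) y) =
      interiorProduct d (ExteriorAlgebra.map φ y) := by
  induction y using CliffordAlgebra.left_induction with
  | algebraMap r =>
    change ExteriorAlgebra.map φ (interiorProduct _ (algebraMap R (ExteriorAlgebra R M) r)) =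
      interiorProduct d (ExteriorAlgebra.map φ (algebraMap R (ExteriorAlgebra R M) r))
    rw [AlgHom.commutes, interiorProduct_algebraMap, interiorProduct_algebraMap, map_zero]
  | add y z hy hz => simp only [map_add, hy, hz]
  | ι_mul y a hy =>
    change ExteriorAlgebra.map φ (interiorProduct _ (ExteriorAlgebra.ι R a * y)) =
      interiorProduct d (ExteriorAlgebra.map φ (ExteriorAlgebra.ι R a * y))
    simp only [interiorProduct_ι_mul, map_sub, map_smul, map_mul, ExteriorAlgebra.map_apply_ι, hy,
      LinearMap.comp_apply]

theorem interiorProduct_ιMulti (d : Module.Dual R M) {n : ℕ} (x : Fin (n + 1) → M) :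
    interiorProduct d (ExteriorAlgebra.ιMulti R (n + 1) x) =
      ∑ k : Fin (n + 1), ((-1) ^ (k : ℕ) * d (x k)) •
        ExteriorAlgebra.ιMulti R n fun i => x (k.succAbove i) := by
  induction n with
  | zero =>
    rw [ExteriorAlgebra.ιMulti_succ_apply, interiorProduct_ι_mul, ExteriorAlgebra.ιMulti_zero_apply,
      interiorProduct_one]
    simp
  | succ n ih =>
    rw [ExteriorAlgebra.ιMulti_succ_apply, interiorProduct_ι_mul, Matrix.vecTail, ih,
      Fin.sum_univ_succ (n := n + 1), Finset.mul_sum, sub_eq_add_neg, ← Finset.sum_neg_distrib]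
    congr 1
    · simp [Function.comp_def]
    · refine Finset.sum_congr rfl fun k _ => ?_
      simp [pow_succ', Matrix.vecTail, Function.comp_def]

theorem prod_interiorProduct_ιMulti {n : ℕ} (d : Fin n → Module.Dual R M) (x : Fin n → M) :
    (List.ofFn fun l => interiorProduct (d l)).prod (ExteriorAlgebra.ιMulti R n x) =
      algebraMap R _ ((-1) ^ (n * (n - 1) / 2) * (Matrix.of fun k l => d l (x k)).det) := by
  induction n with
  | zero => simp
  | succ n ih =>
    rw [List.ofFn_succ', List.concat_eq_append, List.prod_append, List.prod_singleton,
      Module.End.mul_apply, interiorProduct_ιMulti, map_sum, Matrix.det_succ_column _ (Fin.last n),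
      Finset.mul_sum, map_sum]
    refine Finset.sum_congr rfl fun k _ => ?_
    have hminor : ((Matrix.of fun k l => d l (x k)).submatrix k.succAbove (Fin.last n).succAbove) =
        Matrix.of fun i l => d (Fin.castSucc l) (x (k.succAbove i)) := by
      ext; simp
    have hsq : ((-1 : R) ^ n) * (-1) ^ n = 1 := by rw [← mul_pow]; simp
    rw [map_smul, ih, hminor, Nat.triangle_succ, Algebra.smul_def, ← map_mul]
    congr 1
    simp only [Matrix.of_apply, Fin.val_last, pow_add]
    linear_combination (-(-1 : R) ^ (k : ℕ) * d (Fin.last n) (x k) *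
      (-1) ^ (n * (n - 1) / 2) *
        (Matrix.of fun i l => d (Fin.castSucc l) (x (k.succAbove i))).det) * hsq

variable {m n : ℕ}

/-- The family `d_1⌟, …, d_m⌟, x_1 ∧, …, x_n ∧` of annihilation and creation operators on the
exterior algebra. -/
def ladderOp (d : Fin m → Module.Dual R M) (x : Fin n → M) :
    Fin (m + n) → Module.End R (ExteriorAlgebra R M) :=
  Fin.append (fun l => interiorProduct (d l))
    fun k => LinearMap.mulLeft R (ExteriorAlgebra.ι R (x k))

theorem ladderOp_castAdd (d : Fin m → Module.Dual R M) (x : Fin n → M) (l : Fin m) :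
    ladderOp d x (Fin.castAdd n l) = interiorProduct (d l) :=
  Fin.append_left _ _ l

theorem ladderOp_natAdd (d : Fin m → Module.Dual R M) (x : Fin n → M) (k : Fin n) :
    ladderOp d x (Fin.natAdd m k) = LinearMap.mulLeft R (ExteriorAlgebra.ι R (x k)) :=
  Fin.append_right _ _ k

theorem ladderOp_eq_dite (d : Fin m → Module.Dual R M) (x : Fin n → M) (i : Fin (m + n)) :
    ladderOp d x i =
      if h : (i : ℕ) < m then interiorProduct (d ⟨i, h⟩)
      else LinearMap.mulLeft R
        (ExteriorAlgebra.ι R (x ⟨(i : ℕ) - m, by have := i.isLt; omega⟩)) := by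
  cases i using Fin.addCases <;> simp [ladderOp]

theorem ladderOp_anticommute (d : Fin m → Module.Dual R M) (x : Fin n → M) {a b : Fin (m + n)}
    (hab : a < b)
    (h : ∀ l k, a = Fin.castAdd n l → b = Fin.natAdd m k → d l (x k) = 0) :
    ladderOp d x b * ladderOp d x a = -(ladderOp d x a * ladderOp d x b) := by
  refine LinearMap.ext fun y => ?_
  cases a using Fin.addCases with
  | left l =>
    cases b using Fin.addCases with
    | left l' => simpa only [ladderOp_castAdd] using! interiorProduct_comm (d l') (d l) y
    | right k =>
      simp [ladderOp_castAdd, ladderOp_natAdd, interiorProduct_ι_mul, h l k rfl rfl]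
  | right k =>
    cases b using Fin.addCases with
    | left l => simp only [Fin.lt_def, Fin.val_natAdd, Fin.val_castAdd] at hab; omega
    | right k' =>
      have hswap := ExteriorAlgebra.ι_add_mul_swap (R := R) (x k') (x k)
      simp only [ladderOp_natAdd, Module.End.mul_apply, LinearMap.neg_apply,
        LinearMap.mulLeft_apply, ← mul_assoc, ← neg_mul, eq_neg_of_add_eq_zero_left hswap]

theorem interiorProduct_prod_ladderOp_eq_zero (δ : Module.Dual R M) (d : Fin m → Module.Dual R M)
    (x : Fin n → M) (L : List (Fin (m + n))) (h : ∀ k, Fin.natAdd m k ∈ L → δ (x k) = 0) :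
    interiorProduct δ ((L.map (ladderOp d x)).prod 1) = 0 := by
  induction L with
  | nil => exact interiorProduct_one δ
  | cons a L ih =>
    have htail := ih fun k hk => h k (List.mem_cons_of_mem _ hk)
    rw [List.map_cons, List.prod_cons, Module.End.mul_apply]
    cases a using Fin.addCases with
    | left l =>
      rw [ladderOp_castAdd, interiorProduct_comm, htail, map_zero, neg_zero]
    | right k =>
      rw [ladderOp_natAdd, LinearMap.mulLeft_apply, interiorProduct_ι_mul, htail,
        h k List.mem_cons_self, zero_smul, mul_zero, sub_zero]

/-- A contraction only sees the wedge operators to its right: `d_l⌟ - d'_l⌟` anticommutes with all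
operators there and kills `1`. -/
theorem prod_ladderOp_congr (d d' : Fin m → Module.Dual R M) (x : Fin n → M)
    (L : List (Fin (m + n)))
    (h : L.Pairwise fun a b =>
      ∀ l k, a = Fin.castAdd n l → b = Fin.natAdd m k → d l (x k) = d' l (x k)) :
    (L.map (ladderOp d x)).prod 1 = (L.map (ladderOp d' x)).prod 1 := by
  induction h with
  | nil => rfl
  | @cons a L ha _ ih =>
    simp only [List.map_cons, List.prod_cons, Module.End.mul_apply]
    rw [ih]
    cases a using Fin.addCases with
    | left l =>
      have hdiff : interiorProduct (d l - d' l) ((L.map (ladderOp d' x)).prod 1) = 0 :=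
        interiorProduct_prod_ladderOp_eq_zero _ d' x L fun k hk => by
          simp [ha _ hk l k rfl rfl]
      rwa [map_sub, LinearMap.sub_apply, sub_eq_zero, ← ladderOp_castAdd d x,
        ← ladderOp_castAdd d' x] at hdiff
    | right k => rw [ladderOp_natAdd, ladderOp_natAdd]

theorem map_prod_ladderOp (φ : M →ₗ[R] N) (d : Fin m → Module.Dual R N) (x : Fin n → M)
    (L : List (Fin (m + n))) :
    ExteriorAlgebra.map φ ((L.map (ladderOp (fun l => d l ∘ₗ φ) x)).prod 1) =
      (L.map (ladderOp d fun k => φ (x k))).prod 1 := by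
  induction L with
  | nil => simp
  | cons a L ih =>
    simp only [List.map_cons, List.prod_cons, Module.End.mul_apply, ← ih]
    cases a using Fin.addCases with
    | left l => rw [ladderOp_castAdd, ladderOp_castAdd, map_interiorProduct]
    | right k => simp [ladderOp_natAdd]

theorem prod_ofFn_mulLeft_ι_one (x : Fin n → M) :
    (List.ofFn fun k => LinearMap.mulLeft R (ExteriorAlgebra.ι R (x k))).prod 1 =
      ExteriorAlgebra.ιMulti R n x := by
  rw [ExteriorAlgebra.ιMulti_apply]
  induction n with
  | zero => simp
  | succ n ih => rw [List.ofFn_succ, List.ofFn_succ, List.prod_cons, List.prod_cons,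
      Module.End.mul_apply, ih, LinearMap.mulLeft_apply]

theorem prod_ofFn_ladderOp (d : Fin n → Module.Dual R M) (x : Fin n → M) :
    (List.ofFn (ladderOp d x)).prod 1 =
      algebraMap R _ ((-1) ^ (n * (n - 1) / 2) * (Matrix.of fun k l => d l (x k)).det) := by
  rw [ladderOp, List.ofFn_fin_append, List.prod_append, Module.End.mul_apply,
    prod_ofFn_mulLeft_ι_one, prod_interiorProduct_ιMulti]

section Labels

variable {J : Type*} [LinearOrder J] {j j' : Fin n → J} {π : Equiv.Perm (Fin (n + n))}

theorem prod_ladderOp_perm_of_eq_zero (d : Fin n → Module.Dual R M) (x : Fin n → M)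
    (hπ : StrictMono fun i => Fin.append j j' (π i))
    (hd : ∀ k l, j' k < j l → d l (x k) = 0) :
    (List.ofFn fun i => ladderOp d x (π i)).prod 1 =
      Equiv.Perm.sign π • algebraMap R (ExteriorAlgebra R M)
        ((-1) ^ (n * (n - 1) / 2) * (Matrix.of fun k l => d l (x k)).det) := by
  have hsort : (List.ofFn fun i => ladderOp d x (π i)).prod =
      Equiv.Perm.sign π • (List.ofFn (ladderOp d x)).prod :=
    prod_ofFn_perm_eq_sign_smul _ π fun i₁ i₂ hi hlt =>
      ladderOp_anticommute d x hlt fun l k hl hk => hd k l <| by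
        simpa only [hl, hk, Fin.append_left, Fin.append_right] using hπ hi
  rw [hsort, Units.smul_def, LinearMap.smul_apply, prod_ofFn_ladderOp, Units.smul_def]

theorem prod_ladderOp_perm_congr (d d' : Fin n → Module.Dual R M) (x : Fin n → M)
    (hπ : StrictMono fun i => Fin.append j j' (π i))
    (h : ∀ k l, j l < j' k → d l (x k) = d' l (x k)) :
    (List.ofFn fun i => ladderOp d x (π i)).prod 1 =
      (List.ofFn fun i => ladderOp d' x (π i)).prod 1 := by
  have hword := prod_ladderOp_congr d d' x (List.ofFn π) <|
    List.pairwise_ofFn.mpr fun i₁ i₂ hi l k hl hk => h k l <| by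
      simpa only [hl, hk, Fin.append_left, Fin.append_right] using hπ hi
  simpa only [List.map_ofFn, Function.comp_def] using hword

theorem prod_ladderOp_perm (d : Fin n → Module.Dual R M) (x : Fin n → M)
    (hπ : StrictMono fun i => Fin.append j j' (π i)) :
    (List.ofFn fun i => ladderOp d x (π i)).prod 1 =
      Equiv.Perm.sign π • algebraMap R (ExteriorAlgebra R M) ((-1) ^ (n * (n - 1) / 2) *
        (Matrix.of fun k l => d l (x k) * if j l < j' k then 1 else 0).det) := by
  let e : Fin n → Fin n → R := fun k => Pi.single k 1
  let φ : (Fin n → R) →ₗ[R] M := Fintype.linearCombination R x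
  let d' : Fin n → Module.Dual R (Fin n → R) := fun l =>
    Fintype.linearCombination R fun k => d l (x k) * if j l < j' k then 1 else 0
  have hφ : ∀ k, φ (e k) = x k := fun k => by simp [φ, e]
  have hd' : ∀ k l, d' l (e k) = d l (x k) * if j l < j' k then 1 else 0 :=
    fun k l => by simp [d', e]
  have hlift : (List.ofFn fun i => ladderOp d x (π i)).prod 1 = ExteriorAlgebra.map φ
      ((List.ofFn fun i => ladderOp (fun l => d l ∘ₗ φ) e (π i)).prod 1) := by
    simpa only [hφ, List.map_ofFn, Function.comp_def] using
      (map_prod_ladderOp φ d e (List.ofFn π)).symm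
  have hmask : (List.ofFn fun i => ladderOp (fun l => d l ∘ₗ φ) e (π i)).prod 1 =
      (List.ofFn fun i => ladderOp d' e (π i)).prod 1 :=
    prod_ladderOp_perm_congr _ d' e hπ fun k l hlt => by simp [hd', hφ, hlt]
  rw [hlift, hmask, prod_ladderOp_perm_of_eq_zero d' e hπ fun k l hlt => by simp [hd', hlt.not_gt],
    Units.smul_def, map_zsmul, AlgHom.commutes, Units.smul_def]
  simp only [hd']

end Labels

theorem foldr_apply_eq_prod_ofFn_apply {k : ℕ} (f : Fin k → Module.End R M) (y : M) :
    (List.finRange k).foldr (fun i acc => f i acc) y = (List.ofFn f).prod y := by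
  rw [List.ofFn_eq_map]
  induction List.finRange k with
  | nil => rfl
  | cons i L ih => rw [List.foldr_cons, ih, List.map_cons, List.prod_cons, Module.End.mul_apply]

theorem stmt11_general (d : Fin n → Module.Dual R M) (x : Fin n → M)
    {J : Type*} [LinearOrder J] (j j' : Fin n → J) (π : Equiv.Perm (Fin (n + n)))
    (hπ : StrictMono fun i => Fin.append j j' (π i)) :
    algebraMap R (ExteriorAlgebra R M)
        (Matrix.of fun k l => d l (x k) * if j l < j' k then 1 else 0).det =
      ((-1 : R) ^ (n * (n - 1) / 2) * ((Equiv.Perm.sign π : ℤ) : R)) •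
        (List.finRange (n + n)).foldr (fun i acc => ladderOp d x (π i) acc) 1 := by
  have hsign : ((Equiv.Perm.sign π : ℤ) : R) * ((Equiv.Perm.sign π : ℤ) : R) = 1 := by
    rw [← Int.cast_mul, ← Units.val_mul, Int.units_mul_self, Units.val_one, Int.cast_one]
  have hpow : (-1 : R) ^ (n * (n - 1) / 2) * (-1) ^ (n * (n - 1) / 2) = 1 := by
    rw [← mul_pow, neg_one_mul, neg_neg, one_pow]
  rw [foldr_apply_eq_prod_ofFn_apply, prod_ladderOp_perm d x hπ, Units.smul_def,
    ← Int.cast_smul_eq_zsmul R, smul_smul, mul_assoc, hsign, mul_one, Algebra.smul_def, ← map_mul,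
    ← mul_assoc, hpow, one_mul]

end LadderOperators

/-- Theorem 3 of the paper: let `A₁,…,A_{2n}` be the operators on
`ΛV*` given by `Aᵢ = vᵢ⌟` for `1 ≤ i ≤ n` and `A_{n+m} = (α_m ∧ ·)` for
`1 ≤ m ≤ n`, with labels `jᵢ` (for the contractions) and `j'_{i−n}` (for the wedge
operators) in a linearly ordered set, the two label families being strictly
increasing and disjoint.  If `π` is the permutation of `{1,…,2n}` making the labels
of `A_{π(1)},…,A_{π(2n)}` strictly increasing, then the matrix
`M_{kl} = α_k(v_l)·1[j'_k ≻ j_l]` satisfies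
`det M = (−1)^{n(n−1)/2}·sgn(π)·(A_{π(1)} ∘ ⋯ ∘ A_{π(2n)})(1)`. -/
theorem stmt11 (V : Type*) [AddCommGroup V] [Module ℂ V] [FiniteDimensional ℂ V]
    (n : ℕ) (α : Fin n → Module.Dual ℂ V) (v : Fin n → V)
    {J : Type*} [LinearOrder J] (j j' : Fin n → J)
    (hj : StrictMono j) (hj' : StrictMono j')
    (hdisj : ∀ k l : Fin n, j k ≠ j' l)
    (A : Fin (n + n) → (ExteriorAlgebra ℂ (Module.Dual ℂ V) →ₗ[ℂ]
        ExteriorAlgebra ℂ (Module.Dual ℂ V)))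
    (hA : ∀ i : Fin (n + n),
      A i = if h : (i : ℕ) < n then
          CliffordAlgebra.contractLeft (Q := (0 : QuadraticForm ℂ (Module.Dual ℂ V)))
            (Module.Dual.eval ℂ V (v ⟨(i : ℕ), h⟩))
        else
          LinearMap.mulLeft ℂ
            (ExteriorAlgebra.ι ℂ (α ⟨(i : ℕ) - n, by have := i.isLt; omega⟩)))
    (π : Equiv.Perm (Fin (n + n)))
    (hπ : StrictMono fun k : Fin (n + n) => Fin.append j j' (π k)) :
    algebraMap ℂ (ExteriorAlgebra ℂ (Module.Dual ℂ V))
        (Matrix.det (Matrix.of fun k l : Fin n =>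
          α k (v l) * (if j l < j' k then 1 else 0))) =
      ((-1 : ℂ) ^ (n * (n - 1) / 2) * ((Equiv.Perm.sign π : ℤ) : ℂ)) •
        (List.finRange (n + n)).foldr (fun k acc => A (π k) acc) 1 := by
  obtain rfl : A = ladderOp (fun l => Module.Dual.eval ℂ V (v l)) α :=
    funext fun i => by rw [hA, ladderOp_eq_dite]; rfl
  exact stmt11_general (fun l => Module.Dual.eval ℂ V (v l)) α j j' π hπ
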